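/- arXiv:1909.05207 — 2 statements merged into one kernel-verified Lean document; each statement's English description precedes it below -/
import Mathlib

section
/- Let K ⊆ ℝ^d be a compact convex set, and let f_1,...,f_T : K → ℝ be α-strongly convex functions. Let x_1 ∈ K, and for each t let g_t be a subgradient of f_t at x_t with ‖g_t‖ ≤ G. Define the online gradient descent iterates x_{t+1} = Π_K(x_t − η_t g_t) with step sizes η_t = 1/(α t). Then for all T ≥ 1: Σ_{t=1}^T f_t(x_t) − min_{x ∈ K} Σ_{t=1}^T f_t(x) ≤ (G²/(2α))·(1 + log T). -/
open scoped RealInnerProductSpace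

/-!
Projecting onto a convex set does not increase the distance to its points, so a step of length `η`
along `-g` decreases `‖x - y‖² / (2η)` by at least `⟪g, x - y⟫ - η / 2 * ‖g‖²`. Strong convexity
bounds the loss gap by `⟪g, x - y⟫ - α / 2 * ‖x - y‖²`, and `η_t = 1 / (α t)` is the choice for
which `1 / (2η_t) - α / 2 = 1 / (2η_{t-1})`. The sum over `t` then telescopes, and only the terms
`η_t / 2 * ‖g_t‖²` remain.
-/

section NearestPoint

variable {E : Type*} [NormedAddCommGroup E] {K : Set E} {u v x y g : E} {η : ℝ}

/-- `v` is a metric projection of `u` onto `K`, i.e. a point of `K` at minimal distance from `u`.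
A relation and not a function: for general `K` such a point need not exist or be unique. -/
def IsNearestPoint (K : Set E) (u v : E) : Prop :=
  v ∈ K ∧ ∀ z ∈ K, ‖v - u‖ ≤ ‖z - u‖

namespace IsNearestPoint

theorem norm_sub_eq_iInf (h : IsNearestPoint K u v) : ‖u - v‖ = ⨅ w : K, ‖u - w‖ := by
  have : Nonempty K := ⟨⟨v, h.1⟩⟩
  have bddBelow : BddBelow (Set.range fun w : K ↦ ‖u - w‖) :=
    ⟨0, Set.forall_mem_range.2 fun _ ↦ norm_nonneg _⟩
  refine le_antisymm (le_ciInf fun w ↦ ?_) (ciInf_le bddBelow ⟨v, h.1⟩)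
  simpa only [norm_sub_rev u] using h.2 w w.2

variable [InnerProductSpace ℝ E]

theorem real_inner_le_zero (h : IsNearestPoint K u v) (hK : Convex ℝ K) (hy : y ∈ K) :
    ⟪u - v, y - v⟫ ≤ 0 :=
  (norm_eq_iInf_iff_real_inner_le_zero hK h.1).1 h.norm_sub_eq_iInf y hy

theorem norm_sub_le (h : IsNearestPoint K u v) (hK : Convex ℝ K) (hy : y ∈ K) :
    ‖v - y‖ ≤ ‖u - y‖ := by
  have expand : ‖u - y‖ ^ 2 = ‖u - v‖ ^ 2 - 2 * ⟪u - v, y - v⟫ + ‖v - y‖ ^ 2 := by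
    rw [← sub_sub_sub_cancel_right u y v, norm_sub_sq_real, norm_sub_rev y v]
  refine le_of_sq_le_sq ?_ (norm_nonneg _)
  linarith [h.real_inner_le_zero hK hy, sq_nonneg ‖u - v‖]

theorem real_inner_le_of_gradient_step (h : IsNearestPoint K (x - η • g) v) (hK : Convex ℝ K)
    (hη : 0 < η) (hy : y ∈ K) :
    ⟪g, x - y⟫ ≤ (‖x - y‖ ^ 2 - ‖v - y‖ ^ 2) / (2 * η) + η / 2 * ‖g‖ ^ 2 := by
  have descent : ‖v - y‖ ^ 2 ≤ ‖x - y‖ ^ 2 - 2 * η * ⟪g, x - y⟫ + η ^ 2 * ‖g‖ ^ 2 :=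
    calc ‖v - y‖ ^ 2
      _ ≤ ‖x - η • g - y‖ ^ 2 := by gcongr; exact h.norm_sub_le hK hy
      _ = ‖x - y‖ ^ 2 - 2 * η * ⟪g, x - y⟫ + η ^ 2 * ‖g‖ ^ 2 := by
        rw [sub_right_comm, norm_sub_sq_real, real_inner_smul_right, real_inner_comm, norm_smul,
          mul_pow, Real.norm_eq_abs, sq_abs, mul_assoc]
  calc ⟪g, x - y⟫
    _ = 2 * η * ⟪g, x - y⟫ / (2 * η) := by field_simp
    _ ≤ (‖x - y‖ ^ 2 - ‖v - y‖ ^ 2 + η ^ 2 * ‖g‖ ^ 2) / (2 * η) := by gcongr; linarith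
    _ = (‖x - y‖ ^ 2 - ‖v - y‖ ^ 2) / (2 * η) + η / 2 * ‖g‖ ^ 2 := by field_simp

theorem sub_le_of_gradient_step {α : ℝ} {f : E → ℝ} (h : IsNearestPoint K (x - η • g) v)
    (hK : Convex ℝ K) (hη : 0 < η) (hy : y ∈ K)
    (hf : f x + ⟪g, y - x⟫ + α / 2 * ‖y - x‖ ^ 2 ≤ f y) :
    f x - f y ≤ (1 / (2 * η) - α / 2) * ‖x - y‖ ^ 2 - 1 / (2 * η) * ‖v - y‖ ^ 2
      + η / 2 * ‖g‖ ^ 2 := by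
  rw [← neg_sub x y, inner_neg_right, norm_neg] at hf
  linear_combination hf + h.real_inner_le_of_gradient_step hK hη hy

end IsNearestPoint

end NearestPoint

section Regret

variable {E : Type*} [NormedAddCommGroup E] [InnerProductSpace ℝ E] {K : Set E} {α : ℝ} {T : ℕ}
  {f : ℕ → E → ℝ} {x g : ℕ → E} {y : E}

theorem online_gradient_descent_regret_le_sum_norm_sq_div (hK : Convex ℝ K) (hα : 0 < α)
    (hy : y ∈ K)
    (hf : ∀ t ∈ Finset.Icc 1 T,
      f t (x t) + ⟪g t, y - x t⟫ + α / 2 * ‖y - x t‖ ^ 2 ≤ f t y)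
    (hx : ∀ t ∈ Finset.Icc 1 T,
      IsNearestPoint K (x t - (1 / (α * (t : ℝ))) • g t) (x (t + 1))) :
    ∑ t ∈ Finset.Icc 1 T, f t (x t) - ∑ t ∈ Finset.Icc 1 T, f t y ≤
      ∑ t ∈ Finset.Icc 1 T, ‖g t‖ ^ 2 / (2 * α * t) := by
  let potential (t : ℕ) : ℝ := α * (t - 1) / 2 * ‖x t - y‖ ^ 2
  have step : ∀ t ∈ Finset.Icc 1 T, f t (x t) - f t y ≤
      ‖g t‖ ^ 2 / (2 * α * t) - (potential (t + 1) - potential t) := by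
    intro t ht
    have ht_pos : (0 : ℝ) < t := by exact_mod_cast (Finset.mem_Icc.1 ht).1
    refine ((hx t ht).sub_le_of_gradient_step hK (by positivity) hy (hf t ht)).trans_eq ?_
    simp only [potential, Nat.cast_add, Nat.cast_one]
    field_simp
    ring
  have telescope : ∑ t ∈ Finset.Icc 1 T, (potential (t + 1) - potential t) =
      α * T / 2 * ‖x (T + 1) - y‖ ^ 2 := by
    rw [← Finset.Ico_add_one_right_eq_Icc, Finset.sum_Ico_sub potential (Nat.le_add_left 1 T)]
    simp [potential]
  rw [← Finset.sum_sub_distrib]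
  refine (Finset.sum_le_sum step).trans ?_
  rw [Finset.sum_sub_distrib, telescope]
  exact sub_le_self _ (by positivity)

theorem online_gradient_descent_strongly_convex_regret_general {G : ℝ} (hK : Convex ℝ K)
    (hα : 0 < α) (hy : y ∈ K)
    (hf : ∀ t ∈ Finset.Icc 1 T,
      f t (x t) + ⟪g t, y - x t⟫ + α / 2 * ‖y - x t‖ ^ 2 ≤ f t y)
    (hg : ∀ t ∈ Finset.Icc 1 T, ‖g t‖ ≤ G)
    (hx : ∀ t ∈ Finset.Icc 1 T,
      IsNearestPoint K (x t - (1 / (α * (t : ℝ))) • g t) (x (t + 1))) :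
    ∑ t ∈ Finset.Icc 1 T, f t (x t) - ∑ t ∈ Finset.Icc 1 T, f t y ≤
      G ^ 2 / (2 * α) * (harmonic T : ℝ) :=
  calc ∑ t ∈ Finset.Icc 1 T, f t (x t) - ∑ t ∈ Finset.Icc 1 T, f t y
    _ ≤ ∑ t ∈ Finset.Icc 1 T, ‖g t‖ ^ 2 / (2 * α * t) :=
      online_gradient_descent_regret_le_sum_norm_sq_div hK hα hy hf hx
    _ ≤ ∑ t ∈ Finset.Icc 1 T, G ^ 2 / (2 * α * t) := by gcongr with t ht; exact hg t ht
    _ = G ^ 2 / (2 * α) * (harmonic T : ℝ) := by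
      simp only [harmonic_eq_sum_Icc, Rat.cast_sum, Rat.cast_inv, Rat.cast_natCast,
        Finset.mul_sum, ← div_eq_mul_inv, div_div]

end Regret

/-- **Logarithmic regret of online gradient descent for strongly convex losses**
with step sizes `η_t = 1/(α t)`:
`Σ_t f_t(x_t) − min_{x ∈ K} Σ_t f_t(x) ≤ (G²/(2α))·(1 + log T)`. -/
theorem online_gradient_descent_strongly_convex_regret
    {d : ℕ} (K : Set (EuclideanSpace ℝ (Fin d)))
    (hKcomp : IsCompact K) (hKconv : Convex ℝ K)
    (α G : ℝ) (hα : 0 < α) (hG : 0 < G)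
    (proj : EuclideanSpace ℝ (Fin d) → EuclideanSpace ℝ (Fin d))
    (hproj : ∀ y, proj y ∈ K ∧ ∀ z ∈ K, ‖proj y - y‖ ≤ ‖z - y‖)
    (T : ℕ) (hT : 1 ≤ T)
    (f : ℕ → EuclideanSpace ℝ (Fin d) → ℝ)
    (x : ℕ → EuclideanSpace ℝ (Fin d)) (hx1 : x 1 ∈ K)
    (g : ℕ → EuclideanSpace ℝ (Fin d))
    (hstrong : ∀ t ∈ Finset.Icc 1 T, ∀ y ∈ K,
      f t (x t) + ⟪g t, y - x t⟫ + α / 2 * ‖y - x t‖ ^ 2 ≤ f t y)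
    (hgbound : ∀ t ∈ Finset.Icc 1 T, ‖g t‖ ≤ G)
    (hrec : ∀ t ∈ Finset.Icc 1 T,
      x (t + 1) = proj (x t - (1 / (α * (t : ℝ))) • g t)) :
    ∀ y ∈ K,
      ∑ t ∈ Finset.Icc 1 T, f t (x t) - ∑ t ∈ Finset.Icc 1 T, f t y ≤
        G ^ 2 / (2 * α) * (1 + Real.log T) := by
  intro y hy
  exact (online_gradient_descent_strongly_convex_regret_general hKconv hα hy
    (hstrong · · y hy) hgbound fun t ht ↦ hrec t ht ▸ hproj _).trans
      (by gcongr; exact harmonic_le_one_add_log T)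
end

section
/- Let K ⊆ ℝ^n (n ≥ 2) be a compact convex set with Euclidean diameter at most D, and let f_1,...,f_T : K → ℝ be differentiable α-exp-concave functions with ‖∇f_t(x)‖ ≤ G for all x ∈ K. Set γ = (1/2)·min{1/(4GD), α} and ε = 1/(γ²D²). Run the Online Newton Step algorithm: A_0 = ε·I_n, x_1 ∈ K, and for each t, with ∇_t = ∇f_t(x_t), update A_t = A_{t−1} + ∇_t∇_tᵀ, y_{t+1} = x_t − (1/γ)·A_t^{−1}∇_t, and x_{t+1} = argmin_{x ∈ K} (x − y_{t+1})ᵀ A_t (x − y_{t+1}). Then for T ≥ 8: Σ_{t=1}^T f_t(x_t) − min_{x ∈ K} Σ_{t=1}^T f_t(x) ≤ 5·(1/α + GD)·n·log T. -/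
open scoped RealInnerProductSpace
open InnerProductSpace (rankOne)
open Module (finrank)

/-!
Exp-concavity, weakened to the exponent `2γ` by Bernoulli's inequality, and
`log (1 + u) ≤ u - u² / 4` bound the loss of a round by `⟪g, x - z⟫ - γ / 2 * ⟪g, x - z⟫²`, where
`g` is the gradient at the iterate `x`. This is at most the decrease of the potential
`γ / 2 * ‖x_{t+1} - z‖²_{A_t} - 1 / (2γ) * log det A_t`: the quadratic term pays for the change of
norm from `A_{t-1}` to `A_t`, and the matrix determinant lemma with `log s ≤ s - 1` gives
`⟪g, A_t⁻¹ g⟫ ≤ log det A_t - log det A_{t-1}`. After telescoping, AM-GM for the eigenvalues of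
`A_T` bounds `log det A_T` by its trace.
-/

section ScalarInequalities

theorem log_one_add_le_sub_sq_div_four {u : ℝ} (hu : -1 < u) (hu' : u ≤ 1) :
    Real.log (1 + u) ≤ u - u ^ 2 / 4 := by
  rcases le_total 0 u with h_nonneg | h_nonpos
  · have ha : 0 ≤ u - u ^ 2 / 4 := by nlinarith
    rw [Real.log_le_iff_le_exp (by linarith)]
    refine le_trans ?_ (Real.quadratic_le_exp_of_nonneg ha)
    nlinarith [mul_nonneg (sq_nonneg u) (by nlinarith : 0 ≤ (1 - u / 4) ^ 2 - 1 / 2)]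
  · have habs : |-u| < 1 := by rw [abs_of_nonneg (by linarith)]; linarith
    have hpartial := sum_le_hasSum (Finset.range 2)
      (fun i _ => div_nonneg (pow_nonneg (neg_nonneg.2 h_nonpos) _) (by positivity))
      (Real.hasSum_pow_div_log_of_abs_lt_one habs)
    norm_num [Finset.sum_range_succ] at hpartial
    nlinarith

theorem one_add_mul_log_one_add_le {n T s : ℝ} (hn : 1 ≤ n) (hT : 3 ≤ T) (hs : 0 ≤ s)
    (hsT : s ≤ T / 64) : 1 + n * Real.log (1 + s) ≤ n * Real.log T := by
  have hexp : (1 + s) * Real.exp 1 ≤ T := by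
    nlinarith [Real.exp_one_lt_d9, Real.exp_pos 1]
  have hlog : Real.log (1 + s) + 1 ≤ Real.log T := by
    calc Real.log (1 + s) + 1 = Real.log ((1 + s) * Real.exp 1) := by
          rw [Real.log_mul (by positivity) (Real.exp_ne_zero 1), Real.log_exp]
      _ ≤ Real.log T := Real.log_le_log (by positivity) hexp
  nlinarith

theorem one_div_min_one_div {a b : ℝ} (ha : 0 < a) (hb : 0 < b) :
    1 / min (1 / a) b = max a (1 / b) := by
  rcases le_total (1 / a) b with h | h
  · rw [min_eq_left h, one_div_one_div, max_eq_left (one_div_le ha hb |>.1 h)]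
  · rw [min_eq_right h, max_eq_right ((le_one_div hb ha).1 h)]

end ScalarInequalities

section FirstOrder

variable {E : Type*} [NormedAddCommGroup E] [NormedSpace ℝ E] {K : Set E} {x z : E}

theorem concaveOn_sub_le_of_hasFDerivWithinAt {φ : E → ℝ} {φ' : E →L[ℝ] ℝ}
    (hφ : ConcaveOn ℝ K φ) (hx : x ∈ K) (hz : z ∈ K) (hφ' : HasFDerivWithinAt φ φ' K x) :
    φ z - φ x ≤ φ' (z - x) := by
  let line : ℝ →ᵃ[ℝ] E := AffineMap.lineMap x z
  have hline : HasDerivWithinAt line (z - x) (line ⁻¹' K) 0 :=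
    AffineMap.hasDerivWithinAt_lineMap
  have hderiv : HasDerivWithinAt (φ ∘ line) (φ' (z - x)) (line ⁻¹' K) 0 :=
    HasFDerivWithinAt.comp_hasDerivWithinAt 0 (by simpa [line] using hφ') hline
      (Set.mapsTo_preimage _ _)
  have hslope := (hφ.comp_affineMap line).slope_le_of_hasDerivWithinAt
    (by simpa [line] using hx) (by simpa [line] using hz) zero_lt_one hderiv
  simpa [slope_def_field, line] using hslope

/-- `f` is `α`-exp-concave on `K`: the function `exp (-α f)` is concave there. -/
def ExpConcaveOn (α : ℝ) (K : Set E) (f : E → ℝ) : Prop :=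
  ConcaveOn ℝ K fun z => Real.exp (-α * f z)

namespace ExpConcaveOn

variable {α γ : ℝ} {f : E → ℝ} {f' : E →L[ℝ] ℝ}

theorem exp_mul_sub_le (hf : ExpConcaveOn α K f) (hx : x ∈ K) (hz : z ∈ K)
    (hf' : HasFDerivWithinAt f f' K x) :
    Real.exp (α * (f x - f z)) ≤ 1 + α * f' (x - z) := by
  have htangent := concaveOn_sub_le_of_hasFDerivWithinAt hf hx hz (hf'.const_mul (-α)).exp
  have hfactor : Real.exp (-α * f z) = Real.exp (-α * f x) * Real.exp (α * (f x - f z)) := by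
    rw [← Real.exp_add]; ring_nf
  rw [hfactor, ← neg_sub x z, map_neg] at htangent
  simp only [smul_apply, smul_eq_mul] at htangent
  refine le_of_mul_le_mul_left ?_ (Real.exp_pos (-α * f x))
  linarith

theorem sub_le_sub_sq (hf : ExpConcaveOn α K f) (hγ : 0 < γ) (hγα : 2 * γ ≤ α)
    (hx : x ∈ K) (hz : z ∈ K) (hf' : HasFDerivWithinAt f f' K x)
    (hbound : 2 * γ * f' (x - z) ≤ 1) :
    f x - f z ≤ f' (x - z) - γ / 2 * f' (x - z) ^ 2 := by
  have hα : 0 < α := by linarith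
  have hexp := hf.exp_mul_sub_le hx hz hf'
  set d := f' (x - z)
  have hbernoulli : Real.exp (2 * γ * (f x - f z)) ≤ 1 + 2 * γ * d :=
    calc Real.exp (2 * γ * (f x - f z))
        = Real.exp (α * (f x - f z)) ^ (2 * γ / α) := by
          rw [← Real.exp_mul]; congr 1; field_simp
      _ ≤ (1 + α * d) ^ (2 * γ / α) := by gcongr
      _ ≤ 1 + 2 * γ / α * (α * d) :=
          rpow_one_add_le_one_add_mul_self (by linarith [Real.exp_pos (α * (f x - f z))])
            (by positivity) ((div_le_one hα).2 hγα)
      _ = 1 + 2 * γ * d := by field_simp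
  have hpos : 0 < 1 + 2 * γ * d := (Real.exp_pos _).trans_le hbernoulli
  have hlog : 2 * γ * (f x - f z) ≤ 2 * γ * d - (2 * γ * d) ^ 2 / 4 :=
    ((Real.le_log_iff_exp_le hpos).2 hbernoulli).trans
      (log_one_add_le_sub_sq_div_four (by linarith) hbound)
  refine le_of_mul_le_mul_left ?_ (by positivity : 0 < 2 * γ)
  linarith

end ExpConcaveOn

end FirstOrder

section PositiveOperators

variable {E : Type*} [NormedAddCommGroup E] [InnerProductSpace ℝ E] {L : E →ₗ[ℝ] E}

theorem inner_add_apply_add (hL : L.IsSymmetric) (a b : E) :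
    ⟪a + b, L (a + b)⟫ = ⟪a, L a⟫ + 2 * ⟪b, L a⟫ + ⟪b, L b⟫ := by
  have hcross : ⟪a, L b⟫ = ⟪b, L a⟫ := by rw [← hL a b, real_inner_comm]
  simp only [map_add, inner_add_left, inner_add_right, hcross]
  ring

theorem inner_smul_apply_smul (c : ℝ) (v : E) : ⟪c • v, L (c • v)⟫ = c ^ 2 * ⟪v, L v⟫ := by
  rw [map_smul, real_inner_smul_left, real_inner_smul_right]; ring

section Projection

variable {K : Set E} {g w x y p z : E}

theorem inner_nonneg_of_isMinOn (hK : Convex ℝ K) (hL : L.IsSymmetric) (hp : p ∈ K)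
    (hmin : IsMinOn (fun v => ⟪v - y, L (v - y)⟫) K p) (hz : z ∈ K) :
    0 ≤ ⟪z - p, L (p - y)⟫ := by
  have hslope : ∀ᶠ s : ℝ in nhdsWithin 0 (Set.Ioi 0),
      0 ≤ 2 * ⟪z - p, L (p - y)⟫ + s * ⟪z - p, L (z - p)⟫ := by
    filter_upwards [Ioo_mem_nhdsGT zero_lt_one] with s hs
    have hle := isMinOn_iff.1 hmin _ (hK.add_smul_sub_mem hp hz ⟨hs.1.le, hs.2.le⟩)
    rw [add_sub_right_comm, inner_add_apply_add hL, inner_smul_apply_smul,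
      real_inner_smul_left] at hle
    exact nonneg_of_mul_nonneg_right (by linarith) hs.1
  have hlim : Filter.Tendsto
      (fun s : ℝ => 2 * ⟪z - p, L (p - y)⟫ + s * ⟪z - p, L (z - p)⟫)
      (nhdsWithin 0 (Set.Ioi 0)) (nhds (2 * ⟪z - p, L (p - y)⟫)) := by
    refine Filter.Tendsto.mono_left ?_ nhdsWithin_le_nhds
    exact Continuous.tendsto' (by fun_prop) _ _ (by simp)
  linarith [ge_of_tendsto hlim hslope]

theorem inner_projection_sub_le (hK : Convex ℝ K) (hL : L.IsPositive) (hp : p ∈ K)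
    (hmin : IsMinOn (fun v => ⟪v - y, L (v - y)⟫) K p) (hz : z ∈ K) :
    ⟪p - z, L (p - z)⟫ ≤ ⟪y - z, L (y - z)⟫ := by
  have hcross := inner_nonneg_of_isMinOn hK hL.isSymmetric hp hmin hz
  have hexpand := inner_add_apply_add hL.isSymmetric (p - y) (z - p)
  rw [sub_add_sub_cancel'] at hexpand
  have hnonneg : 0 ≤ ⟪p - y, L (p - y)⟫ := hL.inner_nonneg_right _
  rw [← neg_sub z p, ← neg_sub z y, map_neg, map_neg, inner_neg_neg, inner_neg_neg]
  linarith

theorem inner_sub_le_of_projected_newton_step {γ : ℝ} (hγ : 0 < γ) (hK : Convex ℝ K)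
    (hL : L.IsPositive) (hw : L w = g) (hy : y = x - (1 / γ) • w) (hp : p ∈ K)
    (hmin : IsMinOn (fun v => ⟪v - y, L (v - y)⟫) K p) (hz : z ∈ K) :
    ⟪g, x - z⟫ ≤ γ / 2 * (⟪x - z, L (x - z)⟫ - ⟪p - z, L (p - z)⟫) + 1 / (2 * γ) * ⟪g, w⟫ := by
  have hproj := inner_projection_sub_le hK hL hp hmin hz
  have hstep : y - z = (x - z) + (-(1 / γ)) • w := by rw [hy]; module
  rw [hstep, inner_add_apply_add hL.isSymmetric, inner_smul_apply_smul, real_inner_smul_left,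
    ← hL.isSymmetric w, hw, real_inner_comm g w] at hproj
  have hscaled := mul_le_mul_of_nonneg_left hproj (half_pos hγ).le
  have hcancel : γ / 2 * (⟪x - z, L (x - z)⟫ + 2 * (-(1 / γ) * ⟪g, x - z⟫)
      + (-(1 / γ)) ^ 2 * ⟪g, w⟫) =
        γ / 2 * ⟪x - z, L (x - z)⟫ - ⟪g, x - z⟫ + 1 / (2 * γ) * ⟪g, w⟫ := by
    field_simp
    ring
  linarith

end Projection

section Determinant

variable [FiniteDimensional ℝ E] {L' : E →ₗ[ℝ] E} {g w : E}

theorem det_eq_det_mul_one_sub_inner (hL' : L' = L + (rankOne ℝ g g).toLinearMap)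
    (hw : L' w = g) : LinearMap.det L = LinearMap.det L' * (1 - ⟪g, w⟫) := by
  have hfactor : L = L' * LinearMap.transvection (innerₛₗ ℝ g) (-w) := by
    ext1 v
    rw [Module.End.mul_apply, LinearMap.transvection.apply, map_add, map_smul, map_neg, hw, hL']
    simp
  rw [hfactor, map_mul, LinearMap.transvection.det]
  simp [sub_eq_add_neg]

theorem inner_le_log_det_sub_log_det (hL' : L' = L + (rankOne ℝ g g).toLinearMap)
    (hw : L' w = g) (hdet : 0 < LinearMap.det L) (hdet' : 0 < LinearMap.det L') :
    ⟪g, w⟫ ≤ Real.log (LinearMap.det L') - Real.log (LinearMap.det L) := by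
  have hfactor := det_eq_det_mul_one_sub_inner hL' hw
  have hpos : 0 < 1 - ⟪g, w⟫ := pos_of_mul_pos_right (hfactor ▸ hdet) hdet'.le
  rw [hfactor, Real.log_mul hdet'.ne' hpos.ne']
  linarith [Real.log_le_sub_one_of_pos hpos]

theorem det_pos_of_inner_pos (hL : L.IsSymmetric) (hpos : ∀ v ≠ 0, 0 < ⟪v, L v⟫) :
    0 < LinearMap.det L := by
  rw [hL.det_eq_prod_eigenvalues rfl]
  refine Finset.prod_pos fun i _ => ?_
  have hunit := (hL.eigenvectorBasis rfl).orthonormal.1 i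
  have hi := hpos _ ((hL.eigenvectorBasis rfl).toBasis.ne_zero i)
  simpa [hL.apply_eigenvectorBasis, real_inner_smul_right, hunit] using hi

theorem det_le_trace_div_finrank_pow (hL : L.IsPositive) :
    LinearMap.det L ≤ (LinearMap.trace ℝ E L / finrank ℝ E) ^ finrank ℝ E := by
  set n := finrank ℝ E with hn
  set eig := hL.isSymmetric.eigenvalues hn.symm
  have heig : ∀ i, 0 ≤ eig i := hL.nonneg_eigenvalues hn.symm
  rcases Nat.eq_zero_or_pos n with h0 | hpos
  · simp [h0, LinearMap.det_eq_one_of_finrank_eq_zero (hn ▸ h0)]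
  have hamgm : ∏ i, eig i ^ (n : ℝ)⁻¹ ≤ ∑ i, (n : ℝ)⁻¹ * eig i :=
    Real.geom_mean_le_arith_mean_weighted _ _ _ (fun _ _ => by positivity)
      (by simp [hpos.ne']) fun i _ => heig i
  calc LinearMap.det L = (∏ i, eig i ^ (n : ℝ)⁻¹) ^ n := by
        rw [hL.isSymmetric.det_eq_prod_eigenvalues hn.symm, ← Finset.prod_pow]
        exact Finset.prod_congr rfl fun i _ => (Real.rpow_inv_natCast_pow (heig i) hpos.ne').symm
    _ ≤ (∑ i, (n : ℝ)⁻¹ * eig i) ^ n := by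
        gcongr
        exact Finset.prod_nonneg fun i _ => Real.rpow_nonneg (heig i) _
    _ = (LinearMap.trace ℝ E L / n) ^ n := by
        rw [hL.isSymmetric.trace_eq_sum_eigenvalues hn.symm, ← Finset.mul_sum, inv_mul_eq_div]
        rfl

end Determinant

end PositiveOperators

section RegularizedGram

variable {E : Type*} [NormedAddCommGroup E] [InnerProductSpace ℝ E] {ε : ℝ} {g : ℕ → E}

/-- The matrix `A_t = ε I + ∑_{s = 1}^t g_s g_sᵀ` maintained by the Online Newton Step algorithm,
as a linear map. -/
noncomputable def regularizedGram (ε : ℝ) (g : ℕ → E) (t : ℕ) : E →ₗ[ℝ] E :=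
  ε • LinearMap.id + ∑ s ∈ Finset.Icc 1 t, (rankOne ℝ (g s) (g s)).toLinearMap

@[simp]
theorem regularizedGram_zero : regularizedGram ε g 0 = ε • LinearMap.id := by
  simp [regularizedGram]

theorem regularizedGram_succ (t : ℕ) : regularizedGram ε g (t + 1) =
    regularizedGram ε g t + (rankOne ℝ (g (t + 1)) (g (t + 1))).toLinearMap := by
  rw [regularizedGram, Finset.sum_Icc_succ_top (by omega), ← add_assoc, regularizedGram]

theorem isPositive_regularizedGram (hε : 0 ≤ ε) (t : ℕ) : (regularizedGram ε g t).IsPositive :=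
  (LinearMap.isPositive_id.smul_of_nonneg hε).add <| LinearMap.isPositive_sum _ fun s _ =>
    (ContinuousLinearMap.isPositive_toLinearMap_iff _).2
      (InnerProductSpace.isPositive_rankOne_self (g s))

theorem inner_regularizedGram_apply (t : ℕ) (v : E) :
    ⟪v, regularizedGram ε g t v⟫ = ε * ‖v‖ ^ 2 + ∑ s ∈ Finset.Icc 1 t, ⟪g s, v⟫ ^ 2 := by
  simp [regularizedGram, inner_add_right, inner_sum, real_inner_smul_right,
    real_inner_comm v, sq]

theorem inner_regularizedGram_succ_apply (t : ℕ) (v : E) :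
    ⟪v, regularizedGram ε g (t + 1) v⟫ = ⟪v, regularizedGram ε g t v⟫ + ⟪g (t + 1), v⟫ ^ 2 := by
  rw [inner_regularizedGram_apply, inner_regularizedGram_apply,
    Finset.sum_Icc_succ_top (by omega), add_assoc]

variable [FiniteDimensional ℝ E]

theorem det_regularizedGram_pos (hε : 0 < ε) (t : ℕ) :
    0 < LinearMap.det (regularizedGram ε g t) := by
  refine det_pos_of_inner_pos (isPositive_regularizedGram hε.le t).isSymmetric fun v hv => ?_
  rw [inner_regularizedGram_apply]
  positivity

theorem trace_regularizedGram (t : ℕ) : LinearMap.trace ℝ E (regularizedGram ε g t) =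
    finrank ℝ E * ε + ∑ s ∈ Finset.Icc 1 t, ‖g s‖ ^ 2 := by
  simp [regularizedGram, InnerProductSpace.trace_rankOne, mul_comm]

theorem det_regularizedGram_le {G : ℝ} {T : ℕ} (hε : 0 < ε)
    (hg : ∀ t ∈ Finset.Icc 1 T, ‖g t‖ ≤ G) :
    LinearMap.det (regularizedGram ε g T) ≤
      (ε * (1 + T * G ^ 2 / (finrank ℝ E * ε))) ^ finrank ℝ E := by
  rcases Nat.eq_zero_or_pos (finrank ℝ E) with hdim | hdim
  · simp [hdim, LinearMap.det_eq_one_of_finrank_eq_zero hdim]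
  have hpos := isPositive_regularizedGram (g := g) hε.le T
  have hsum : ∑ s ∈ Finset.Icc 1 T, ‖g s‖ ^ 2 ≤ T * G ^ 2 := by
    simpa using Finset.sum_le_card_nsmul _ _ (G ^ 2) fun t ht =>
      pow_le_pow_left₀ (norm_nonneg _) (hg t ht) 2
  calc LinearMap.det (regularizedGram ε g T)
      ≤ (LinearMap.trace ℝ E (regularizedGram ε g T) / finrank ℝ E) ^ finrank ℝ E :=
        det_le_trace_div_finrank_pow hpos
    _ ≤ ((finrank ℝ E * ε + T * G ^ 2) / finrank ℝ E) ^ finrank ℝ E := by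
        have := hpos.trace_nonneg
        rw [trace_regularizedGram] at *
        gcongr
    _ = (ε * (1 + T * G ^ 2 / (finrank ℝ E * ε))) ^ finrank ℝ E := by
        congr 1
        field_simp

theorem log_det_regularizedGram_sub_le {G : ℝ} {T : ℕ} (hε : 0 < ε)
    (hg : ∀ t ∈ Finset.Icc 1 T, ‖g t‖ ≤ G) :
    Real.log (LinearMap.det (regularizedGram ε g T))
        - Real.log (LinearMap.det (regularizedGram ε g 0)) ≤
      finrank ℝ E * Real.log (1 + T * G ^ 2 / (finrank ℝ E * ε)) := by
  have hlog := Real.log_le_log (det_regularizedGram_pos hε T) (det_regularizedGram_le hε hg)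
  rw [Real.log_pow, Real.log_mul hε.ne' (by positivity)] at hlog
  have hinit : Real.log (LinearMap.det (regularizedGram ε g 0)) = finrank ℝ E * Real.log ε := by
    simp [LinearMap.det_smul]
  linarith

end RegularizedGram

section OnlineNewtonStep

variable {E : Type*} [NormedAddCommGroup E] [InnerProductSpace ℝ E] {K : Set E} {α γ ε D G : ℝ}
  {T : ℕ} {f : ℕ → E → ℝ} {g x y w : ℕ → E} {A : ℕ → E → E} {z : E}

/-- `T` rounds of the Online Newton Step algorithm on `K` for the gradient sequence `g`, with step
parameter `γ` and regularization `ε`. The matrix `A_t` is encoded as the map `v ↦ A_t v`, and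
`w t` is the Newton direction `A_t⁻¹ g_t`. -/
structure IsOnlineNewtonStep (K : Set E) (γ ε : ℝ) (T : ℕ) (g x y w : ℕ → E)
    (A : ℕ → E → E) : Prop where
  init_mem : x 1 ∈ K
  matrix_zero : ∀ v, A 0 v = ε • v
  matrix_update : ∀ t ∈ Finset.Icc 1 T, ∀ v, A t v = A (t - 1) v + ⟪g t, v⟫ • g t
  newton_direction : ∀ t ∈ Finset.Icc 1 T, A t (w t) = g t
  newton_step : ∀ t ∈ Finset.Icc 1 T, y (t + 1) = x t - (1 / γ) • w t
  projection : ∀ t ∈ Finset.Icc 1 T, x (t + 1) ∈ K ∧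
    ∀ z ∈ K, ⟪x (t + 1) - y (t + 1), A t (x (t + 1) - y (t + 1))⟫ ≤
      ⟪z - y (t + 1), A t (z - y (t + 1))⟫

/-- The potential whose decrease pays for the regret against `z`: the squared `A_t`-distance from
the next iterate to `z`, minus a multiple of `log det A_t`. -/
noncomputable def newtonPotential (γ ε : ℝ) (g x : ℕ → E) (z : E) (t : ℕ) : ℝ :=
  γ / 2 * ⟪x (t + 1) - z, regularizedGram ε g t (x (t + 1) - z)⟫
    - 1 / (2 * γ) * Real.log (LinearMap.det (regularizedGram ε g t))

namespace IsOnlineNewtonStep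

theorem matrix_apply (h : IsOnlineNewtonStep K γ ε T g x y w A) {t : ℕ} (ht : t ≤ T) (v : E) :
    A t v = regularizedGram ε g t v := by
  induction t with
  | zero => simp [h.matrix_zero]
  | succ t ih =>
    rw [h.matrix_update (t + 1) (by simpa using ht), Nat.add_sub_cancel, ih (by omega),
      regularizedGram_succ]
    simp

theorem iterate_mem (h : IsOnlineNewtonStep K γ ε T g x y w A) {t : ℕ}
    (ht : t ∈ Finset.Icc 1 T) : x t ∈ K := by
  obtain ⟨ht1, htT⟩ := Finset.mem_Icc.1 ht
  rcases ht1.eq_or_lt with rfl | hlt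
  · exact h.init_mem
  · obtain ⟨s, rfl⟩ := Nat.exists_eq_add_of_lt hlt
    exact (h.projection (1 + s) (by simp; omega)).1

variable [FiniteDimensional ℝ E]

theorem inner_sub_sq_le_newtonPotential_sub (h : IsOnlineNewtonStep K γ ε T g x y w A)
    (hK : Convex ℝ K) (hγ : 0 < γ) (hε : 0 < ε) (hz : z ∈ K) {t : ℕ} (ht : t + 1 ≤ T) :
    ⟪g (t + 1), x (t + 1) - z⟫ - γ / 2 * ⟪g (t + 1), x (t + 1) - z⟫ ^ 2 ≤
      newtonPotential γ ε g x z t - newtonPotential γ ε g x z (t + 1) := by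
  have hround : t + 1 ∈ Finset.Icc 1 T := by simpa using ht
  have hw : regularizedGram ε g (t + 1) (w (t + 1)) = g (t + 1) := by
    rw [← h.matrix_apply ht, h.newton_direction _ hround]
  have hmin : IsMinOn (fun v => ⟪v - y (t + 1 + 1), regularizedGram ε g (t + 1)
      (v - y (t + 1 + 1))⟫) K (x (t + 1 + 1)) := isMinOn_iff.2 fun v hv => by
    simpa only [h.matrix_apply ht] using (h.projection _ hround).2 v hv
  have hstep := inner_sub_le_of_projected_newton_step hγ hK
    (isPositive_regularizedGram hε.le (t + 1)) hw (h.newton_step _ hround)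
    (h.projection _ hround).1 hmin hz
  rw [inner_regularizedGram_succ_apply] at hstep
  have hlogdet := inner_le_log_det_sub_log_det (regularizedGram_succ t) hw
    (det_regularizedGram_pos hε t) (det_regularizedGram_pos hε (t + 1))
  have hscaled := mul_le_mul_of_nonneg_left hlogdet (by positivity : 0 ≤ 1 / (2 * γ))
  unfold newtonPotential
  linarith

theorem sum_inner_sub_sq_le (h : IsOnlineNewtonStep K γ ε T g x y w A) (hK : Convex ℝ K)
    (hγ : 0 < γ) (hε : 0 < ε) (hg : ∀ t ∈ Finset.Icc 1 T, ‖g t‖ ≤ G) (hz : z ∈ K) :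
    ∑ t ∈ Finset.Icc 1 T, (⟪g t, x t - z⟫ - γ / 2 * ⟪g t, x t - z⟫ ^ 2) ≤
      γ / 2 * (ε * ‖x 1 - z‖ ^ 2) +
        1 / (2 * γ) * (finrank ℝ E * Real.log (1 + T * G ^ 2 / (finrank ℝ E * ε))) := by
  have htelescope : ∑ t ∈ Finset.Icc 1 T, (⟪g t, x t - z⟫ - γ / 2 * ⟪g t, x t - z⟫ ^ 2) ≤
      newtonPotential γ ε g x z 0 - newtonPotential γ ε g x z T := by
    rw [← Finset.sum_range_sub', ← Finset.Ico_add_one_right_eq_Icc,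
      Finset.sum_Ico_eq_sum_range, Nat.add_sub_cancel]
    simp only [add_comm 1]
    exact Finset.sum_le_sum fun t ht =>
      h.inner_sub_sq_le_newtonPotential_sub hK hγ hε hz (Finset.mem_range.1 ht)
  have hlogdet := mul_le_mul_of_nonneg_left (log_det_regularizedGram_sub_le hε hg)
    (by positivity : 0 ≤ 1 / (2 * γ))
  have hinit : ⟪x 1 - z, regularizedGram ε g 0 (x 1 - z)⟫ = ε * ‖x 1 - z‖ ^ 2 := by
    rw [inner_regularizedGram_apply]; simp
  have hfinal : 0 ≤ γ / 2 * ⟪x (T + 1) - z, regularizedGram ε g T (x (T + 1) - z)⟫ :=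
    mul_nonneg (by positivity) ((isPositive_regularizedGram hε.le T).inner_nonneg_right _)
  simp only [newtonPotential, zero_add, hinit] at htelescope
  linarith

theorem regret_le (h : IsOnlineNewtonStep K γ ε T g x y w A) (hK : Convex ℝ K)
    (hdiam : ∀ x ∈ K, ∀ y ∈ K, ‖x - y‖ ≤ D)
    (hf : ∀ t ∈ Finset.Icc 1 T, ExpConcaveOn α K (f t))
    (hf' : ∀ t ∈ Finset.Icc 1 T, HasFDerivWithinAt (f t) (innerSL ℝ (g t)) K (x t))
    (hg : ∀ t ∈ Finset.Icc 1 T, ‖g t‖ ≤ G) (hγ : 0 < γ) (hγα : 2 * γ ≤ α)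
    (hγGD : 2 * γ * (G * D) ≤ 1) (hε : 0 < ε) (hz : z ∈ K) :
    ∑ t ∈ Finset.Icc 1 T, f t (x t) - ∑ t ∈ Finset.Icc 1 T, f t z ≤
      γ / 2 * (ε * D ^ 2) +
        1 / (2 * γ) * (finrank ℝ E * Real.log (1 + T * G ^ 2 / (finrank ℝ E * ε))) := by
  have hround : ∀ t ∈ Finset.Icc 1 T,
      f t (x t) - f t z ≤ ⟪g t, x t - z⟫ - γ / 2 * ⟪g t, x t - z⟫ ^ 2 := by
    intro t ht
    have hxt := h.iterate_mem ht
    have hinner : ⟪g t, x t - z⟫ ≤ G * D := (real_inner_le_norm _ _).trans <|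
      mul_le_mul (hg t ht) (hdiam _ hxt _ hz) (norm_nonneg _) ((norm_nonneg _).trans (hg t ht))
    have hbound : 2 * γ * ⟪g t, x t - z⟫ ≤ 1 :=
      (mul_le_mul_of_nonneg_left hinner (by positivity)).trans hγGD
    exact (hf t ht).sub_le_sub_sq hγ hγα hxt hz (hf' t ht) hbound
  rw [← Finset.sum_sub_distrib]
  refine (Finset.sum_le_sum hround).trans <|
    (h.sum_inner_sub_sq_le hK hγ hε hg hz).trans ?_
  have hstart := hdiam _ h.init_mem _ hz
  gcongr

end IsOnlineNewtonStep

theorem online_newton_step_regret_general [FiniteDimensional ℝ E] (hK : Convex ℝ K)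
    (hα : 0 < α) (hD : 0 < D) (hG : 0 < G) (hdiam : ∀ x ∈ K, ∀ y ∈ K, ‖x - y‖ ≤ D)
    (hT : 3 ≤ T) (hf : ∀ t ∈ Finset.Icc 1 T, ExpConcaveOn α K (f t))
    (hf' : ∀ t ∈ Finset.Icc 1 T, HasFDerivWithinAt (f t) (innerSL ℝ (g t)) K (x t))
    (hg : ∀ t ∈ Finset.Icc 1 T, ‖g t‖ ≤ G) (hγ : γ = 1 / 2 * min (1 / (4 * G * D)) α)
    (hε : ε = 1 / (γ ^ 2 * D ^ 2)) (h : IsOnlineNewtonStep K γ ε T g x y w A) (hz : z ∈ K) :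
    ∑ t ∈ Finset.Icc 1 T, f t (x t) - ∑ t ∈ Finset.Icc 1 T, f t z ≤
      max (4 * G * D) (1 / α) * finrank ℝ E * Real.log T := by
  rcases subsingleton_or_nontrivial E with _ | _
  · simp [Module.finrank_zero_of_subsingleton, Subsingleton.elim _ z]
  have hmin : 2 * γ = min (1 / (4 * G * D)) α := by rw [hγ]; ring
  have hγ_pos : 0 < γ := by rw [hγ]; positivity
  have hγα : 2 * γ ≤ α := hmin ▸ min_le_right _ _
  have hγGD : 2 * γ * (G * D) ≤ 1 / 4 := by
    have := (le_div_iff₀ (by positivity)).1 (hmin ▸ min_le_left (1 / (4 * G * D)) α)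
    linarith
  have hε_pos : 0 < ε := by rw [hε]; positivity
  have hdim : (1 : ℝ) ≤ finrank ℝ E := mod_cast Module.finrank_pos
  have hratio : (T : ℝ) * G ^ 2 / (finrank ℝ E * ε) ≤ T / 64 := by
    calc (T : ℝ) * G ^ 2 / (finrank ℝ E * ε) = T * (γ * (G * D)) ^ 2 / finrank ℝ E := by
          rw [hε, mul_one_div, div_div_eq_mul_div]; ring
      _ ≤ (T : ℝ) * (1 / 8) ^ 2 / 1 := by gcongr; linarith
      _ = (T : ℝ) / 64 := by ring
  calc ∑ t ∈ Finset.Icc 1 T, f t (x t) - ∑ t ∈ Finset.Icc 1 T, f t z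
      ≤ γ / 2 * (ε * D ^ 2) +
        1 / (2 * γ) * (finrank ℝ E * Real.log (1 + T * G ^ 2 / (finrank ℝ E * ε))) :=
        h.regret_le hK hdiam hf hf' hg hγ_pos hγα (by linarith) hε_pos hz
    _ = 1 / (2 * γ) *
        (1 + finrank ℝ E * Real.log (1 + T * G ^ 2 / (finrank ℝ E * ε))) := by
        rw [mul_one_add, hε]; field_simp
    _ ≤ 1 / (2 * γ) * (finrank ℝ E * Real.log T) := by
        gcongr
        exact one_add_mul_log_one_add_le hdim (mod_cast hT) (by positivity) hratio
    _ = max (4 * G * D) (1 / α) * finrank ℝ E * Real.log T := by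
        rw [mul_assoc, hmin, one_div_min_one_div (by positivity) hα]

end OnlineNewtonStep

/-- **Regret of the Online Newton Step algorithm** for `α`-exp-concave losses:
with `γ = (1/2)·min{1/(4GD), α}` and `ε = 1/(γ²D²)`, for `T ≥ 8`,
`Σ_t f_t(x_t) − min_{x ∈ K} Σ_t f_t(x) ≤ 5·(1/α + GD)·n·log T`.
The matrices `A_t` are encoded as the linear maps `v ↦ A_t v`; the Newton direction
`A_t⁻¹ ∇_t` is the (unique) vector `w_t` with `A_t w_t = ∇_t`, and `x_{t+1}` is the
projection of `y_{t+1}` onto `K` in the norm induced by `A_t`. -/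
theorem online_newton_step_regret
    {n : ℕ} (hn : 2 ≤ n)
    (K : Set (EuclideanSpace ℝ (Fin n)))
    (hKcomp : IsCompact K) (hKconv : Convex ℝ K)
    (α D G : ℝ) (hα : 0 < α) (hD : 0 < D) (hG : 0 < G)
    (hdiam : ∀ x ∈ K, ∀ y ∈ K, ‖x - y‖ ≤ D)
    (T : ℕ) (hT : 8 ≤ T)
    (f : ℕ → EuclideanSpace ℝ (Fin n) → ℝ)
    (hconc : ∀ t ∈ Finset.Icc 1 T, ConcaveOn ℝ K (fun z => Real.exp (-α * f t z)))
    (gf : ℕ → EuclideanSpace ℝ (Fin n) → EuclideanSpace ℝ (Fin n))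
    (hgf : ∀ t ∈ Finset.Icc 1 T, ∀ z ∈ K, HasGradientAt (f t) (gf t z) z)
    (hGb : ∀ t ∈ Finset.Icc 1 T, ∀ z ∈ K, ‖gf t z‖ ≤ G)
    (γ ε : ℝ)
    (hγ : γ = 1 / 2 * min (1 / (4 * G * D)) α)
    (hε : ε = 1 / (γ ^ 2 * D ^ 2))
    (x y w : ℕ → EuclideanSpace ℝ (Fin n))
    (A : ℕ → EuclideanSpace ℝ (Fin n) → EuclideanSpace ℝ (Fin n))
    (hx1 : x 1 ∈ K)
    (hA0 : ∀ v, A 0 v = ε • v)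
    (hArec : ∀ t ∈ Finset.Icc 1 T, ∀ v,
      A t v = A (t - 1) v + ⟪gf t (x t), v⟫ • gf t (x t))
    (hw : ∀ t ∈ Finset.Icc 1 T, A t (w t) = gf t (x t))
    (hy : ∀ t ∈ Finset.Icc 1 T, y (t + 1) = x t - (1 / γ) • w t)
    (hproj : ∀ t ∈ Finset.Icc 1 T, x (t + 1) ∈ K ∧
      ∀ z ∈ K, ⟪x (t + 1) - y (t + 1), A t (x (t + 1) - y (t + 1))⟫ ≤
        ⟪z - y (t + 1), A t (z - y (t + 1))⟫) :
    ∀ z ∈ K,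
      ∑ t ∈ Finset.Icc 1 T, f t (x t) - ∑ t ∈ Finset.Icc 1 T, f t z ≤
        5 * (1 / α + G * D) * n * Real.log T := by
  intro z hz
  have hrun : IsOnlineNewtonStep K γ ε T (fun t => gf t (x t)) x y w A :=
    ⟨hx1, hA0, hArec, hw, hy, hproj⟩
  have hconst : max (4 * G * D) (1 / α) ≤ 5 * (1 / α + G * D) :=
    max_le (by linarith [mul_pos hG hD, one_div_pos.2 hα])
      (by linarith [mul_pos hG hD, one_div_pos.2 hα])
  have hregret := online_newton_step_regret_general hKconv hα hD hG hdiam (by omega) hconc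
    (fun t ht => (hgf t ht _ (hrun.iterate_mem ht)).hasFDerivAt.hasFDerivWithinAt)
    (fun t ht => hGb t ht _ (hrun.iterate_mem ht)) hγ hε hrun hz
  rw [finrank_euclideanSpace_fin] at hregret
  exact hregret.trans (by gcongr)
end
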